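/- arXiv:1705.00055 — 11 statements merged into one kernel-verified Lean document; each statement's English description precedes it below -/
import Mathlib

section
/- Let G be a simple graph, let s, t be vertices and let w_1, …, w_k be a sequence of vertices of G. Then the following are equivalent: (i) there exist walks W_0 from s to w_1, W_1 from w_1 to w_2, …, W_k from w_k to t such that the concatenation of edge lists of W_0, …, W_k has no duplicate edges (i.e., the concatenated route is a trail through the waypoints in order); (ii) there exist paths P_0 from s to w_1, P_1 from w_1 to w_2, …, P_k from w_k to t that are pairwise edge-disjoint. -/
/-!
Shortcutting a walk to a path only discards edges, so edge-disjoint walks yield edge-disjoint paths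
with the same endpoints; conversely a path repeats no edge, so the edges of pairwise edge-disjoint
paths can be listed one path after another without repetition.
-/

open scoped Function

theorem nodup_flatten_ofFn_iff {α : Type*} {n : ℕ} (l : Fin n → List α) :
    (List.ofFn l).flatten.Nodup ↔ (∀ i, (l i).Nodup) ∧ Pairwise (List.Disjoint on l) := by
  have disjoint_symm : Std.Symm (List.Disjoint (α := α)) := ⟨fun _ _ h => h.symm⟩
  rw [List.nodup_flatten, List.forall_mem_ofFn_iff, List.pairwise_ofFn, Std.Symm.pairwise_on]

section Walks

variable {V : Type*} {G : SimpleGraph V}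

theorem pairwise_disjoint_edges_bypass [DecidableEq V] {ι : Type*} {a b : ι → V}
    {W : (i : ι) → G.Walk (a i) (b i)} (hW : Pairwise (List.Disjoint on fun i => (W i).edges)) :
    Pairwise (List.Disjoint on fun i => (W i).bypass.edges) :=
  hW.mono fun i j h => List.disjoint_of_subset_left (W i).edges_bypass_subset_edges
    (List.disjoint_of_subset_right (W j).edges_bypass_subset_edges h)

theorem nodup_flatten_edges_iff {n : ℕ} {a b : Fin n → V} (W : (i : Fin n) → G.Walk (a i) (b i)) :
    (List.ofFn fun i => (W i).edges).flatten.Nodup ↔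
      (∀ i, (W i).IsTrail) ∧ Pairwise (List.Disjoint on fun i => (W i).edges) := by
  simp only [nodup_flatten_ofFn_iff, SimpleGraph.Walk.isTrail_def]

end Walks

theorem waypoint_trail_iff_edge_disjoint_paths_general {V : Type*} (G : SimpleGraph V) {n : ℕ}
    (a b : Fin n → V) :
    (∃ W : (i : Fin n) → G.Walk (a i) (b i), (List.ofFn fun i => (W i).edges).flatten.Nodup) ↔
      ∃ P : (i : Fin n) → G.Walk (a i) (b i),
        (∀ i, (P i).IsPath) ∧ Pairwise (List.Disjoint on fun i => (P i).edges) := by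
  classical
  simp only [nodup_flatten_edges_iff]
  constructor
  · rintro ⟨W, -, hdisj⟩
    exact ⟨fun i => (W i).bypass, fun i => (W i).bypass_isPath,
      pairwise_disjoint_edges_bypass hdisj⟩
  · rintro ⟨P, hpath, hdisj⟩
    exact ⟨P, fun i => (hpath i).isTrail, hdisj⟩

/-- In a simple graph `G`, with source `s`, destination `t` and ordered
waypoints `w 0, …, w (k-1)`, there exist walks between the consecutive endpoints
`s, w 0, …, w (k-1), t` whose concatenated edge lists have no duplicate edges
iff there exist pairwise edge-disjoint simple paths between those consecutive endpoints. -/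
theorem waypoint_trail_iff_edge_disjoint_paths {V : Type*} (G : SimpleGraph V)
    (k : ℕ) (s t : V) (w : Fin k → V)
    (p : Fin (k + 2) → V) (hp : p = Fin.snoc (Fin.cons s w) t) :
    (∃ W : (i : Fin (k + 1)) → G.Walk (p i.castSucc) (p i.succ),
        ((List.ofFn fun i => (W i).edges).flatten).Nodup) ↔
    (∃ P : (i : Fin (k + 1)) → G.Walk (p i.castSucc) (p i.succ),
        (∀ i, (P i).IsPath) ∧
        ∀ i j, i ≠ j → List.Disjoint (P i).edges (P j).edges) :=
  waypoint_trail_iff_edge_disjoint_paths_general G (fun i => p i.castSucc) fun i => p i.succ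
end

section
/- Let G be a simple graph, let s, t be vertices and let w_1, …, w_k be a sequence of vertices of G (set w_0 = s and w_{k+1} = t). Suppose the family (W_0, …, W_k), where each W_i is a walk from w_i to w_{i+1} and the concatenation of their edge lists has no duplicate edges, has minimum total length (total number of edges) among all such families. Then every W_i is a simple path (has no repeated vertices). -/
/-!
Bypassing the closed subwalks of a walk only deletes edges, so doing it to every walk of an
edge-disjoint family leaves an edge-disjoint family with the same endpoints. By minimality no
length can drop, hence every walk is its own bypass.
-/

theorem flatten_ofFn_sublist_flatten_ofFn {α : Type*} {n : ℕ} {f g : Fin n → List α}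
    (h : ∀ i, (f i).Sublist (g i)) :
    (List.ofFn f).flatten.Sublist (List.ofFn g).flatten := by
  rw [List.ofFn_eq_map, List.ofFn_eq_map, ← List.flatMap_def, ← List.flatMap_def]
  exact .flatMap_right _ fun i _ => h i

section Bypass

variable {V : Type*} [DecidableEq V] {G : SimpleGraph V}

theorem isPath_of_length_le_length_bypass {u v : V} {p : G.Walk u v}
    (h : p.length ≤ p.bypass.length) : p.IsPath :=
  p.bypass_eq_self_of_length_le_length_bypass h ▸ p.bypass_isPath

theorem isPath_of_sum_length_le_sum_length_bypass {ι : Type*} {S : Finset ι} {a b : ι → V}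
    {W : ∀ i, G.Walk (a i) (b i)}
    (h : ∑ i ∈ S, (W i).length ≤ ∑ i ∈ S, (W i).bypass.length) :
    ∀ i ∈ S, (W i).IsPath := by
  have bypass_le : ∀ i ∈ S, (W i).bypass.length ≤ (W i).length :=
    fun i _ => (W i).length_bypass_le_length
  have length_eq : ∀ i ∈ S, (W i).bypass.length = (W i).length :=
    (Finset.sum_eq_sum_iff_of_le bypass_le).1 ((Finset.sum_le_sum bypass_le).antisymm h)
  exact fun i hi => isPath_of_length_le_length_bypass (length_eq i hi).ge

theorem nodup_flatten_ofFn_edges_bypass {n : ℕ} {a b : Fin n → V}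
    {W : ∀ i, G.Walk (a i) (b i)} (hW : (List.ofFn fun i => (W i).edges).flatten.Nodup) :
    (List.ofFn fun i => (W i).bypass.edges).flatten.Nodup :=
  hW.sublist (flatten_ofFn_sublist_flatten_ofFn fun i => (W i).edges_bypass_sublist_edges)

end Bypass

theorem shortest_waypoint_route_segments_are_paths_general {V : Type*} (G : SimpleGraph V)
    {n : ℕ} (a b : Fin n → V) (W : ∀ i, G.Walk (a i) (b i))
    (hW : (List.ofFn fun i => (W i).edges).flatten.Nodup)
    (hmin : ∀ W' : ∀ i, G.Walk (a i) (b i),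
      (List.ofFn fun i => (W' i).edges).flatten.Nodup →
      ∑ i, (W i).length ≤ ∑ i, (W' i).length) :
    ∀ i, (W i).IsPath := by
  classical
  have sum_le : ∑ i, (W i).length ≤ ∑ i, (W i).bypass.length :=
    hmin (fun i => (W i).bypass) (nodup_flatten_ofFn_edges_bypass hW)
  exact fun i => isPath_of_sum_length_le_sum_length_bypass sum_le i (Finset.mem_univ i)

/-- Observation 1 of the paper. If a family of walks between the
consecutive endpoints `s = p 0, w 1, …, w k, t = p (k+1)` whose concatenated edge
lists have no duplicate edges has minimum total length among all such families, then
every walk in the family is a simple path. -/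
theorem shortest_waypoint_route_segments_are_paths {V : Type*} (G : SimpleGraph V)
    (k : ℕ) (s t : V) (w : Fin k → V)
    (p : Fin (k + 2) → V) (hp : p = Fin.snoc (Fin.cons s w) t)
    (W : (i : Fin (k + 1)) → G.Walk (p i.castSucc) (p i.succ))
    (hW : ((List.ofFn fun i => (W i).edges).flatten).Nodup)
    (hmin : ∀ W' : (i : Fin (k + 1)) → G.Walk (p i.castSucc) (p i.succ),
        ((List.ofFn fun i => (W' i).edges).flatten).Nodup →
        (∑ i, (W i).length) ≤ ∑ i, (W' i).length) :
    ∀ i, (W i).IsPath :=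
  shortest_waypoint_route_segments_are_paths_general G _ _ W hW hmin
end

section
/- Let G be a simple graph and let s, t, w be vertices of G. There exists a trail from s to t whose support contains w if and only if there exist a path P from s to w and a path Q from w to t such that P and Q are edge-disjoint. -/
/-! Split a trail at a visit to the waypoint: its two parts are edge-disjoint walks, and removing
detours from each leaves paths that use no new edges. Conversely, concatenating edge-disjoint
paths repeats no edge, even if the paths share vertices. -/

theorem disjoint_edges_bypass {V : Type*} [DecidableEq V] {G H : SimpleGraph V} {a b c d : V}
    {p : G.Walk a b} {q : H.Walk c d} (h : p.edges.Disjoint q.edges) :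
    p.bypass.edges.Disjoint q.bypass.edges :=
  List.disjoint_of_subset_left p.edges_bypass_subset_edges <|
    List.disjoint_of_subset_right q.edges_bypass_subset_edges h

/-- In a simple graph `G`, there is a trail from `s` to `t` whose support
contains the waypoint `w` iff there are a path from `s` to `w` and a path from `w` to `t`
that are edge-disjoint. -/
theorem trail_through_waypoint_iff_edge_disjoint_paths {V : Type*} (G : SimpleGraph V)
    (s t w : V) :
    (∃ T : G.Walk s t, T.IsTrail ∧ w ∈ T.support) ↔
    (∃ (P : G.Walk s w) (Q : G.Walk w t), P.IsPath ∧ Q.IsPath ∧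
      List.Disjoint P.edges Q.edges) := by
  classical
  constructor
  · rintro ⟨T, hT, hw⟩
    have hdisj := hT.disjoint_edges_takeUntil_dropUntil hw
    exact ⟨(T.takeUntil w hw).bypass, (T.dropUntil w hw).bypass,
      (T.takeUntil w hw).bypass_isPath, (T.dropUntil w hw).bypass_isPath,
      disjoint_edges_bypass hdisj⟩
  · rintro ⟨P, Q, hP, hQ, hdisj⟩
    have htrail : (P.append Q).IsTrail :=
      (P.isTrail_append Q).mpr ⟨hP.isTrail, hQ.isTrail, hdisj⟩
    have hw : w ∈ (P.append Q).support :=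
      SimpleGraph.Walk.mem_support_iff_exists_append.mpr ⟨P, Q, rfl⟩
    exact ⟨P.append Q, htrail, hw⟩
end

section
/- Let G be a simple graph and let s, w be distinct vertices of G. There exists a closed trail starting and ending at s whose support contains w if and only if there exist two edge-disjoint paths from s to w. -/
section

open SimpleGraph

variable {V : Type*} {G : SimpleGraph V} {s t w : V}

theorem disjoint_edges_bypass_s3 [DecidableEq V] {u v x y : V} {p : G.Walk u v} {q : G.Walk x y}
    (h : p.edges.Disjoint q.edges) : p.bypass.edges.Disjoint q.bypass.edges :=
  List.disjoint_of_subset_left p.edges_bypass_subset_edges <|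
    List.disjoint_of_subset_right q.edges_bypass_subset_edges h

theorem isTrail_append_reverse (p : G.Walk s w) (q : G.Walk t w) :
    (p.append q.reverse).IsTrail ↔ p.IsTrail ∧ q.IsTrail ∧ p.edges.Disjoint q.edges := by
  rw [Walk.isTrail_append, Walk.reverse_isTrail_iff, Walk.edges_reverse,
    List.disjoint_reverse_right]

theorem exists_isTrail_mem_support_iff_exists_disjoint_isTrail :
    (∃ T : G.Walk s t, T.IsTrail ∧ w ∈ T.support) ↔
      ∃ (p : G.Walk s w) (q : G.Walk t w), p.IsTrail ∧ q.IsTrail ∧ p.edges.Disjoint q.edges := by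
  simp only [← isTrail_append_reverse]
  constructor
  · rintro ⟨T, hT, hw⟩
    obtain ⟨p, q, rfl⟩ := T.mem_support_iff_exists_append.mp hw
    exact ⟨p, q.reverse, by rwa [Walk.reverse_reverse]⟩
  · rintro ⟨p, q, hpq⟩
    exact ⟨p.append q.reverse, hpq, by simp⟩

end

theorem closed_trail_through_waypoint_iff_two_edge_disjoint_paths_general {V : Type*}
    (G : SimpleGraph V) (s t w : V) :
    (∃ T : G.Walk s t, T.IsTrail ∧ w ∈ T.support) ↔
    (∃ (P : G.Walk s w) (Q : G.Walk t w),
      P.IsPath ∧ Q.IsPath ∧ List.Disjoint P.edges Q.edges) := by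
  classical
  rw [exists_isTrail_mem_support_iff_exists_disjoint_isTrail]
  constructor
  · rintro ⟨p, q, -, -, hpq⟩
    exact ⟨p.bypass, q.bypass, p.bypass_isPath, q.bypass_isPath,
      disjoint_edges_bypass_s3 hpq⟩
  · rintro ⟨P, Q, hP, hQ, hPQ⟩
    exact ⟨P, Q, hP.isTrail, hQ.isTrail, hPQ⟩

/-- In a simple graph `G`, for distinct vertices `s ≠ w`, there is a closed
trail at `s` whose support contains `w` iff there are two edge-disjoint paths from `s` to `w`. -/
theorem closed_trail_through_waypoint_iff_two_edge_disjoint_paths {V : Type*}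
    (G : SimpleGraph V) (s w : V) (hsw : s ≠ w) :
    (∃ T : G.Walk s s, T.IsTrail ∧ w ∈ T.support) ↔
    (∃ P Q : G.Walk s w, P.IsPath ∧ Q.IsPath ∧ List.Disjoint P.edges Q.edges) :=
  closed_trail_through_waypoint_iff_two_edge_disjoint_paths_general G s s w
end

section
/- Let G be a simple graph on a vertex type V, let s, t, w be vertices of G with s ≠ t, and let G' be the simple graph on V ⊕ Unit in which two old vertices are adjacent exactly when they are adjacent in G, and the new vertex x (the element of Unit) is adjacent exactly to s and to t. Then there exist two edge-disjoint paths from x to w in G' if and only if there exist a path from s to w and a path from t to w in G that are edge-disjoint. -/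
/-!
Deleting the first step of a path that starts at `x` leaves a path avoiding `x`, i.e. a path of the
rest of the graph that starts at a neighbour of `x`. The first edges of two paths from `x` coincide
exactly when the two neighbours do, so edge-disjoint paths from `x` correspond to edge-disjoint
paths from two distinct neighbours.
-/

section

open SimpleGraph Set

variable {V W : Type*} {G : SimpleGraph V} {H : SimpleGraph W} {a b c d : V} {x : W}

theorem exists_map_eq_of_support_subset_range (f : G ↪g H) (p : H.Walk (f a) (f b))
    (hp : ∀ z ∈ p.support, z ∈ range f) : ∃ q : G.Walk a b, q.map f.toHom = p := by
  suffices lift : ∀ {u v : W} (p : H.Walk u v), (∀ z ∈ p.support, z ∈ range f) →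
      ∀ {a b : V} (ha : f a = u) (hb : f b = v),
        ∃ q : G.Walk a b, (q.map f.toHom).copy ha hb = p from lift p hp rfl rfl
  intro u v p hp
  induction p with
  | nil =>
    rintro a b rfl hb
    obtain rfl := f.injective hb
    exact ⟨.nil, rfl⟩
  | cons h p ih =>
    rintro a b rfl rfl
    rw [Walk.support_cons, List.forall_mem_cons] at hp
    obtain ⟨c, rfl⟩ := hp.2 _ p.start_mem_support
    obtain ⟨q, rfl⟩ := ih hp.2 rfl rfl
    exact ⟨.cons (f.map_adj_iff.1 h) q, rfl⟩

theorem notMem_support_map_of_notMem_range {f : G →g H} (hx : x ∉ range f) (p : G.Walk a b) :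
    x ∉ (p.map f).support := by
  rw [Walk.support_map, List.mem_map]
  rintro ⟨v, -, rfl⟩
  exact hx (mem_range_self v)

theorem isPath_cons_map_iff {f : G →g H} (hf : Function.Injective f) (hx : x ∉ range f)
    (h : H.Adj x (f a)) (p : G.Walk a b) : (Walk.cons h (p.map f)).IsPath ↔ p.IsPath := by
  rw [Walk.cons_isPath_iff, Walk.isPath_map_iff_of_injective hf,
    and_iff_left (notMem_support_map_of_notMem_range hx p)]

theorem disjoint_edges_map_iff {f : G →g H} (hf : Function.Injective f)
    (p : G.Walk a b) (q : G.Walk c d) :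
    List.Disjoint (p.map f).edges (q.map f).edges ↔ List.Disjoint p.edges q.edges := by
  rw [Walk.edges_map, Walk.edges_map]
  exact ⟨fun h e hp hq => h (List.mem_map_of_mem hp) (List.mem_map_of_mem hq),
    List.disjoint_map (Sym2.map.injective hf)⟩

theorem disjoint_edges_cons_map_iff {f : G →g H} (hf : Function.Injective f) (hx : x ∉ range f)
    (ha : H.Adj x (f a)) (p : G.Walk a b) (hc : H.Adj x (f c)) (q : G.Walk c d) :
    List.Disjoint (Walk.cons ha (p.map f)).edges (Walk.cons hc (q.map f)).edges ↔
      a ≠ c ∧ List.Disjoint p.edges q.edges := by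
  have edge_notMem {u v : V} (r : G.Walk u v) (y : W) : s(x, y) ∉ (r.map f).edges := fun h =>
    notMem_support_map_of_notMem_range hx r (Walk.fst_mem_support_of_mem_edges _ h)
  have first_edges_eq_iff : s(x, f c) = s(x, f a) ↔ a = c := by
    rw [Sym2.congr_right, hf.eq_iff, eq_comm]
  simp only [Walk.edges_cons, List.disjoint_cons_left, List.disjoint_cons_right, List.mem_cons,
    edge_notMem, or_false, not_false_eq_true, true_and, first_edges_eq_iff,
    disjoint_edges_map_iff hf, ne_eq]

theorem exists_eq_cons_map_of_isPath {f : G ↪g H} (hf : range f = {x}ᶜ) {P : H.Walk x (f b)}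
    (hP : P.IsPath) :
    ∃ (a : V) (h : H.Adj x (f a)) (p : G.Walk a b), P = .cons h (p.map f.toHom) := by
  have mem_range_iff (z : W) : z ∈ range f ↔ z ≠ x := by rw [hf, mem_compl_singleton_iff]
  obtain ⟨v, h, P, rfl⟩ := P.exists_eq_cons_of_ne ((mem_range_iff _).1 (mem_range_self b)).symm
  obtain ⟨a, rfl⟩ := (mem_range_iff v).2 h.ne'
  have hxP : x ∉ P.support := ((Walk.cons_isPath_iff h P).1 hP).2
  obtain ⟨p, rfl⟩ := exists_map_eq_of_support_subset_range f P fun z hz =>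
    (mem_range_iff z).2 (ne_of_mem_of_not_mem hz hxP)
  exact ⟨a, h, p, rfl⟩

theorem exists_disjoint_paths_iff_exists_ne_adj {f : G ↪g H} (hf : range f = {x}ᶜ) (w : V) :
    (∃ P Q : H.Walk x (f w), P.IsPath ∧ Q.IsPath ∧ List.Disjoint P.edges Q.edges) ↔
      ∃ a b : V, H.Adj x (f a) ∧ H.Adj x (f b) ∧ a ≠ b ∧
        ∃ (P : G.Walk a w) (Q : G.Walk b w), P.IsPath ∧ Q.IsPath ∧
          List.Disjoint P.edges Q.edges := by
  have hx : x ∉ range f := by simp [hf]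
  constructor
  · rintro ⟨P, Q, hP, hQ, hPQ⟩
    obtain ⟨a, ha, p, rfl⟩ := exists_eq_cons_map_of_isPath hf hP
    obtain ⟨b, hb, q, rfl⟩ := exists_eq_cons_map_of_isPath hf hQ
    obtain ⟨hab, hpq⟩ := (disjoint_edges_cons_map_iff f.injective hx ha p hb q).1 hPQ
    exact ⟨a, b, ha, hb, hab, p, q, (isPath_cons_map_iff f.injective hx ha p).1 hP,
      (isPath_cons_map_iff f.injective hx hb q).1 hQ, hpq⟩
  · rintro ⟨a, b, ha, hb, hab, p, q, hp, hq, hpq⟩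
    exact ⟨.cons ha (p.map f.toHom), .cons hb (q.map f.toHom),
      (isPath_cons_map_iff f.injective hx ha p).2 hp,
      (isPath_cons_map_iff f.injective hx hb q).2 hq,
      (disjoint_edges_cons_map_iff f.injective hx ha p hb q).2 ⟨hab, hpq⟩⟩

end

/-- super-source construction of Theorem 1. Let `G'` be the graph on
`V ⊕ Unit` in which old vertices are adjacent exactly as in `G` and the new vertex
`Sum.inr ()` is adjacent exactly to `s` and `t` (with `s ≠ t`). Then there are two
edge-disjoint paths from the new vertex to `w` in `G'` iff there are a path from `s`
to `w` and a path from `t` to `w` in `G` that are edge-disjoint. -/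
theorem super_source_two_disjoint_paths_iff {V : Type*} (G : SimpleGraph V)
    (s t w : V) (hst : s ≠ t)
    (G' : SimpleGraph (V ⊕ Unit))
    (hG'old : ∀ a b : V, G'.Adj (Sum.inl a) (Sum.inl b) ↔ G.Adj a b)
    (hG'new : ∀ a : V, G'.Adj (Sum.inr ()) (Sum.inl a) ↔ (a = s ∨ a = t))
    (hG'loop : ¬ G'.Adj (Sum.inr ()) (Sum.inr ())) :
    (∃ P Q : G'.Walk (Sum.inr ()) (Sum.inl w), P.IsPath ∧ Q.IsPath ∧
      List.Disjoint P.edges Q.edges) ↔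
    (∃ (P : G.Walk s w) (Q : G.Walk t w), P.IsPath ∧ Q.IsPath ∧
      List.Disjoint P.edges Q.edges) := by
  let f : G ↪g G' := ⟨.inl, hG'old _ _⟩
  have range_f : Set.range f = {Sum.inr ()}ᶜ := by
    change Set.range Sum.inl = _
    ext (v | ⟨⟩) <;> simp
  refine (exists_disjoint_paths_iff_exists_ne_adj range_f w).trans ⟨?_, ?_⟩
  · rintro ⟨a, b, ha, hb, hab, P, Q, hP, hQ, hPQ⟩
    obtain rfl | rfl := (hG'new a).1 ha <;> obtain rfl | rfl := (hG'new b).1 hb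
    · exact absurd rfl hab
    · exact ⟨P, Q, hP, hQ, hPQ⟩
    · exact ⟨Q, P, hQ, hP, hPQ.symm⟩
    · exact absurd rfl hab
  · exact fun h => ⟨s, t, (hG'new s).2 (.inl rfl), (hG'new t).2 (.inr rfl), hst, h⟩
end

section
/- Let r : V → V → Prop be a digraph, let s, t be vertices and let w_1, …, w_k be a sequence of vertices. Then the following are equivalent: (i) there exist directed walks W_0 from s to w_1, W_1 from w_1 to w_2, …, W_k from w_k to t such that the concatenation of their arc lists has no duplicate arcs; (ii) there exist directed paths P_0 from s to w_1, P_1 from w_1 to w_2, …, P_k from w_k to t that are pairwise arc-disjoint. -/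
/-- A directed walk in the digraph `r` from `a` to `b`: a nonempty list of vertices
starting at `a`, ending at `b`, with `r` holding between consecutive vertices. -/
def IsDiwalk {V : Type*} (r : V → V → Prop) (a b : V) (l : List V) : Prop :=
  l ≠ [] ∧ l.head? = some a ∧ l.getLast? = some b ∧ l.Chain' r

/-- The arcs of a directed walk: the list of ordered pairs of consecutive vertices. -/
def arcs {V : Type*} (l : List V) : List (V × V) := l.zip l.tail

/-- A directed path: a directed walk with no repeated vertices. -/
def IsDipath {V : Type*} (r : V → V → Prop) (a b : V) (l : List V) : Prop :=
  IsDiwalk r a b l ∧ l.Nodup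

/-!
Cycles can be erased from a directed walk without using new arcs: erase them from the walk minus
its first vertex `x`, then prepend `x`, or, if the resulting path already meets `x`, keep only its
part from `x` on. Thus arc-disjoint walks shrink to arc-disjoint paths. Conversely, a path never
repeats an arc, so concatenating pairwise arc-disjoint paths repeats none.
-/

open List

section

variable {α V : Type*} {r : V → V → Prop} {a b c : V} {l l₁ l₂ : List V}

theorem nodup_flatten_ofFn {n : ℕ} {f : Fin n → List α} :
    (ofFn f).flatten.Nodup ↔
      (∀ i, (f i).Nodup) ∧ ∀ i j, i ≠ j → List.Disjoint (f i) (f j) := by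
  have : Std.Symm (List.Disjoint (α := α)) := ⟨fun _ _ h => h.symm⟩
  rw [nodup_flatten, forall_mem_ofFn_iff, pairwise_ofFn, ← Std.Symm.pairwise_on f]
  rfl

theorem nodup_arcs (h : l.Nodup) : (arcs l).Nodup := by
  have map_snd_arcs : (arcs l).map Prod.snd = l.tail := map_snd_zip (by simp)
  exact .of_map Prod.snd (map_snd_arcs ▸ h.tail)

theorem arcs_suffix_arcs_cons (x : V) (l : List V) : arcs l <:+ arcs (x :: l) := by
  cases l with
  | nil => exact nil_suffix
  | cons y l => exact suffix_cons (x, y) (arcs (y :: l))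

theorem arcs_suffix_arcs (h : l₁ <:+ l₂) : arcs l₁ <:+ arcs l₂ := by
  obtain ⟨u, rfl⟩ := h
  induction u with
  | nil => exact suffix_rfl
  | cons x u ih => exact ih.trans (arcs_suffix_arcs_cons x (u ++ l₁))

namespace IsDiwalk

theorem eq_cons_tail (h : IsDiwalk r a b l) : l = a :: l.tail :=
  (cons_head?_tail h.2.1).symm

theorem arcs_cons (h : IsDiwalk r b c l) (a : V) : arcs (a :: l) = (a, b) :: arcs l := by
  rw [h.eq_cons_tail]
  rfl

theorem cons (hab : r a b) (h : IsDiwalk r b c l) : IsDiwalk r a c (a :: l) := by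
  obtain ⟨-, hhead, hlast, hchain⟩ := h
  refine ⟨cons_ne_nil a l, rfl, ?_, isChain_cons.2 ⟨?_, hchain⟩⟩
  · rw [getLast?_cons, hlast, Option.getD_some]
  · simpa [hhead] using hab

theorem of_cons_cons (h : IsDiwalk r a c (a :: b :: l)) :
    r a b ∧ IsDiwalk r b c (b :: l) := by
  obtain ⟨-, -, hlast, hchain⟩ := h
  obtain ⟨hab, hchain⟩ := isChain_cons_cons.1 hchain
  exact ⟨hab, cons_ne_nil b l, rfl, getLast?_cons_cons ▸ hlast, hchain⟩

theorem of_append_cons (h : IsDiwalk r a b (l₁ ++ c :: l₂)) : IsDiwalk r c b (c :: l₂) := by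
  obtain ⟨-, -, hlast, hchain⟩ := h
  refine ⟨cons_ne_nil c l₂, rfl, ?_, hchain.right_of_append⟩
  rwa [getLast?_append_of_ne_nil _ (cons_ne_nil c l₂)] at hlast

theorem exists_isDipath_arcs_sublist (h : IsDiwalk r a b l) :
    ∃ q, IsDipath r a b q ∧ arcs q <+ arcs l := by
  induction l generalizing a with
  | nil => exact absurd rfl h.1
  | cons x l ih =>
    obtain rfl : x = a := by simpa using h.2.1
    cases l with
    | nil => exact ⟨[x], ⟨h, nodup_singleton x⟩, Sublist.refl _⟩
    | cons y l =>
      obtain ⟨hxy, htail⟩ := h.of_cons_cons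
      obtain ⟨q, ⟨hwalk, hnodup⟩, harcs⟩ := ih htail
      by_cases hx : x ∈ q
      · obtain ⟨u, v, rfl⟩ := append_of_mem hx
        have hsuffix : x :: v <:+ u ++ x :: v := suffix_append u (x :: v)
        refine ⟨x :: v, ⟨hwalk.of_append_cons, hnodup.sublist hsuffix.sublist⟩, ?_⟩
        calc
          arcs (x :: v) <+ arcs (u ++ x :: v) := (arcs_suffix_arcs hsuffix).sublist
          _ <+ arcs (y :: l) := harcs
          _ <+ arcs (x :: y :: l) := (arcs_suffix_arcs_cons x (y :: l)).sublist
      · refine ⟨x :: q, ⟨hwalk.cons hxy, nodup_cons.2 ⟨hx, hnodup⟩⟩, ?_⟩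
        rw [hwalk.arcs_cons, htail.arcs_cons]
        exact harcs.cons_cons (x, y)

end IsDiwalk

end

theorem directed_waypoint_trail_iff_arc_disjoint_paths_general {V : Type*} {n : ℕ}
    (r : V → V → Prop) (a b : Fin n → V) :
    (∃ W : Fin n → List V,
        (∀ i, IsDiwalk r (a i) (b i) (W i)) ∧ (ofFn fun i => arcs (W i)).flatten.Nodup) ↔
    (∃ P : Fin n → List V,
        (∀ i, IsDipath r (a i) (b i) (P i)) ∧
        ∀ i j, i ≠ j → List.Disjoint (arcs (P i)) (arcs (P j))) := by
  simp only [nodup_flatten_ofFn]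
  constructor
  · rintro ⟨W, hW, -, hdisjoint⟩
    choose P hP hsub using fun i => (hW i).exists_isDipath_arcs_sublist
    exact ⟨P, hP, fun i j hij =>
      disjoint_of_subset_left (hsub i).subset
        (disjoint_of_subset_right (hsub j).subset (hdisjoint i j hij))⟩
  · rintro ⟨P, hP, hdisjoint⟩
    exact ⟨P, fun i => (hP i).1, fun i => nodup_arcs (hP i).2, hdisjoint⟩

/-- In a digraph `r`, with source `s`, destination `t` and ordered
waypoints `w 0, …, w (k-1)`, there exist directed walks between the consecutive
endpoints `s, w 0, …, w (k-1), t` whose concatenated arc lists have no duplicate arcs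
iff there exist pairwise arc-disjoint directed paths between those consecutive endpoints. -/
theorem directed_waypoint_trail_iff_arc_disjoint_paths {V : Type*}
    (r : V → V → Prop) (k : ℕ) (s t : V) (w : Fin k → V)
    (p : Fin (k + 2) → V) (hp : p = Fin.snoc (Fin.cons s w) t) :
    (∃ W : Fin (k + 1) → List V,
        (∀ i, IsDiwalk r (p i.castSucc) (p i.succ) (W i)) ∧
        ((List.ofFn fun i => arcs (W i)).flatten).Nodup) ↔
    (∃ P : Fin (k + 1) → List V,
        (∀ i, IsDipath r (p i.castSucc) (p i.succ) (P i)) ∧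
        ∀ i j, i ≠ j → List.Disjoint (arcs (P i)) (arcs (P j))) :=
  directed_waypoint_trail_iff_arc_disjoint_paths_general r
    (fun i => p i.castSucc) fun i => p i.succ
end

section
/- Let G be a simple graph that is locally finite at a vertex v, and let W_1, …, W_m be pairwise edge-disjoint trails such that each W_j is a trail from a_j to b_j, has v in its support, and satisfies v ≠ a_j and v ≠ b_j. Then 2·m ≤ deg(v), the degree of v in G. -/
/-!
A trail passing through `v` enters and leaves `v` along two distinct edges, so it has at least two
neighbors of `v` along its edges. For edge-disjoint trails these sets of neighbors are disjoint, and
all of them lie in the neighborhood of `v`.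
-/

theorem mul_card_le_encard_iUnion_of_pairwise_disjoint {ι α : Type*} {s : ι → Set α} {k : ℕ∞}
    (hdisj : Pairwise (Function.onFun Disjoint s)) (hk : ∀ i, k ≤ (s i).encard) :
    k * ENat.card ι ≤ (⋃ i, s i).encard := by
  obtain rfl | hk₀ := eq_or_ne k 0
  · simp
  cases finite_or_infinite ι with
  | inl _ =>
    have := Fintype.ofFinite ι
    calc k * ENat.card ι = ∑ _i : ι, k := by simp [mul_comm]
      _ ≤ ∑ i, (s i).encard := Finset.sum_le_sum fun i _ => hk i
      _ = (⋃ i, s i).encard := by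
        rw [Set.encard_iUnion_of_finite hdisj, finsum_eq_sum_of_fintype]
  | inr _ =>
    have hne (i : ι) : (s i).Nonempty :=
      Set.encard_ne_zero.mp ((pos_iff_ne_zero.mpr hk₀).trans_le (hk i)).ne'
    have hinj : Function.Injective s :=
      Function.injective_iff_pairwise_ne.mpr <| hdisj.mono fun i _ h => h.ne (hne i).ne_empty
    rw [(Set.infinite_iUnion hinj).encard_eq]
    exact le_top

section SimpleGraph

variable {V : Type*} {G : SimpleGraph V} {v : V}

theorem encard_neighborSet_eq_degree [Fintype (G.neighborSet v)] :
    (G.neighborSet v).encard = G.degree v :=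
  Set.encard_eq_coe_toFinset_card _

theorem disjoint_neighborSet_of_disjoint_edgeSet {H K : G.Subgraph}
    (h : Disjoint H.edgeSet K.edgeSet) : Disjoint (H.neighborSet v) (K.neighborSet v) :=
  Set.disjoint_left.mpr fun w hH hK => h.notMem_of_mem_left (a := s(v, w)) hH hK

theorem nontrivial_neighborSet_toSubgraph_of_isTrail {a b : V} {p : G.Walk a b} (hp : p.IsTrail)
    (hv : v ∈ p.support) (hva : v ≠ a) (hvb : v ≠ b) :
    (p.toSubgraph.neighborSet v).Nontrivial := by
  classical
  let q := p.takeUntil v hv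
  let r := p.dropUntil v hv
  have hin : s(v, q.penultimate) ∈ q.edges :=
    Sym2.eq_swap ▸ q.mk_penultimate_end_mem_edges fun h => hva h.eq.symm
  have hout : s(v, r.snd) ∈ r.edges := r.mk_start_snd_mem_edges fun h => hvb h.eq
  have hne : q.penultimate ≠ r.snd := fun h =>
    hp.disjoint_edges_takeUntil_dropUntil hv hin (h ▸ hout)
  exact ⟨_, p.mem_edges_toSubgraph.mpr (p.edges_takeUntil_subset_edges hv hin),
    _, p.mem_edges_toSubgraph.mpr (p.edges_dropUntil_subset_edges hv hout), hne⟩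

theorem edge_disjoint_trails_through_vertex_degree_bound_general {ι : Type*} {a b : ι → V}
    (W : (j : ι) → G.Walk (a j) (b j)) (htrail : ∀ j, (W j).IsTrail)
    (hsupp : ∀ j, v ∈ (W j).support) (hva : ∀ j, v ≠ a j) (hvb : ∀ j, v ≠ b j)
    (hdisj : ∀ i j, i ≠ j → List.Disjoint (W i).edges (W j).edges) :
    2 * ENat.card ι ≤ (G.neighborSet v).encard := by
  let N (j : ι) : Set V := (W j).toSubgraph.neighborSet v
  have hN_disj : Pairwise (Function.onFun Disjoint N) := fun i j hij =>
    disjoint_neighborSet_of_disjoint_edgeSet <| by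
      simp only [SimpleGraph.Walk.edgeSet_toSubgraph]
      exact Set.disjoint_left.mpr fun _ hi hj => hdisj i j hij hi hj
  have hN_two (j : ι) : 2 ≤ (N j).encard :=
    Order.add_one_le_of_lt <| Set.one_lt_encard_iff_nontrivial.mpr <|
      nontrivial_neighborSet_toSubgraph_of_isTrail (htrail j) (hsupp j) (hva j) (hvb j)
  calc
    2 * ENat.card ι ≤ (⋃ j, N j).encard :=
      mul_card_le_encard_iUnion_of_pairwise_disjoint hN_disj hN_two
    _ ≤ (G.neighborSet v).encard :=
      Set.encard_le_encard <| Set.iUnion_subset fun j => (W j).toSubgraph.neighborSet_subset v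

end SimpleGraph

/-- the counting argument behind the Claim in Theorem 8. If
`W 0, …, W (m-1)` are pairwise edge-disjoint trails, each containing the vertex `v`
in its support but having both endpoints different from `v`, then `2 * m ≤ deg v`. -/
theorem edge_disjoint_trails_through_vertex_degree_bound {V : Type*}
    (G : SimpleGraph V) (v : V) [Fintype (G.neighborSet v)]
    (m : ℕ) (a b : Fin m → V)
    (W : (j : Fin m) → G.Walk (a j) (b j))
    (htrail : ∀ j, (W j).IsTrail)
    (hsupp : ∀ j, v ∈ (W j).support)
    (hva : ∀ j, v ≠ a j) (hvb : ∀ j, v ≠ b j)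
    (hdisj : ∀ i j, i ≠ j → List.Disjoint (W i).edges (W j).edges) :
    2 * m ≤ G.degree v := by
  exact ENat.natCast_le_natCast.mp <| by simpa [encard_neighborSet_eq_degree] using
    edge_disjoint_trails_through_vertex_degree_bound_general W htrail hsupp hva hvb hdisj
end

section
/- Let G be a simple graph that is locally finite at a vertex v, and let W_1, …, W_m be pairwise edge-disjoint trails such that each W_j is a trail from a_j to b_j, has v in its support, and satisfies v ≠ a_j and v ≠ b_j. If deg(v) = 2·m, then every edge of G incident to v occurs in the edge list of some W_j. -/
/-!
A trail runs through an even number of edges at `v` unless exactly one of its ends is `v`; so if it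
is not constant and meets `v`, it uses at least two of them. Edge-disjointness lets these counts be
added: together the trails use at least as many edges at `v` as there are, hence all of them.
-/

section

open SimpleGraph

variable {V : Type*} {G : SimpleGraph V} [DecidableEq V]

theorem two_le_countP_edges_of_isTrail {u w v : V} {p : G.Walk u w} (hp : p.IsTrail)
    (hnil : ¬p.Nil) (hv : v ∈ p.support) (hends : u ≠ w → v ≠ u ∧ v ≠ w) :
    2 ≤ p.edges.countP (v ∈ ·) := by
  have heven : Even (p.edges.countP (v ∈ ·)) := (hp.even_countP_edges_iff v).mpr hends
  have hpos : 0 < p.edges.countP (v ∈ ·) := by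
    simpa only [List.countP_pos_iff, decide_eq_true_eq] using
      (Walk.mem_support_iff_exists_mem_edges_of_not_nil hnil).mp hv
  exact Nat.le_of_dvd hpos heven.two_dvd

theorem card_filter_edgesFinset_of_isTrail {u w : V} {p : G.Walk u w} (hp : p.IsTrail) (v : V) :
    (hp.edgesFinset.filter (v ∈ ·)).card = p.edges.countP (v ∈ ·) := by
  rw [← Multiset.coe_countP, Multiset.countP_eq_card_filter]
  rfl

theorem exists_mem_edges_of_degree_le_sum_countP {ι : Type*} [Fintype ι] {v : V}
    [Fintype (G.neighborSet v)] {a b : ι → V} {W : (j : ι) → G.Walk (a j) (b j)}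
    (htrail : ∀ j, (W j).IsTrail)
    (hdisj : ∀ i j, i ≠ j → List.Disjoint (W i).edges (W j).edges)
    (hdeg : G.degree v ≤ ∑ j, (W j).edges.countP (v ∈ ·)) :
    ∀ e ∈ G.incidenceSet v, ∃ j, e ∈ (W j).edges := by
  let edgesAt (j : ι) : Finset (Sym2 V) := (htrail j).edgesFinset.filter (v ∈ ·)
  have mem_edgesAt {j : ι} {e : Sym2 V} : e ∈ edgesAt j ↔ e ∈ (W j).edges ∧ v ∈ e :=
    Finset.mem_filter
  have hpairwise : ((Finset.univ : Finset ι) : Set ι).PairwiseDisjoint edgesAt :=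
    fun i _ j _ hij => Finset.disjoint_left.mpr fun _ hi hj =>
      hdisj i j hij (mem_edgesAt.mp hi).1 (mem_edgesAt.mp hj).1
  have hsubset : Finset.univ.biUnion edgesAt ⊆ G.incidenceFinset v :=
    Finset.biUnion_subset.mpr fun j _ e he => (G.mem_incidenceFinset v e).mpr
      ⟨(W j).edges_subset_edgeSet (mem_edgesAt.mp he).1, (mem_edgesAt.mp he).2⟩
  have hcard : (G.incidenceFinset v).card ≤ (Finset.univ.biUnion edgesAt).card := by
    simpa only [card_incidenceFinset_eq_degree, Finset.card_biUnion hpairwise, edgesAt,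
      card_filter_edgesFinset_of_isTrail] using hdeg
  intro e he
  rw [← G.mem_incidenceFinset, ← Finset.eq_of_subset_of_card_le hsubset hcard] at he
  obtain ⟨j, -, hj⟩ := Finset.mem_biUnion.mp he
  exact ⟨j, (mem_edgesAt.mp hj).1⟩

end

theorem edge_disjoint_trails_saturate_incident_edges_general {V ι : Type*} [Fintype ι]
    (G : SimpleGraph V) (v : V) [Fintype (G.neighborSet v)] (a b : ι → V)
    (W : (j : ι) → G.Walk (a j) (b j))
    (htrail : ∀ j, (W j).IsTrail)
    (hnil : ∀ j, ¬(W j).Nil)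
    (hsupp : ∀ j, v ∈ (W j).support)
    (hends : ∀ j, a j ≠ b j → v ≠ a j ∧ v ≠ b j)
    (hdisj : ∀ i j, i ≠ j → List.Disjoint (W i).edges (W j).edges)
    (hdeg : G.degree v ≤ 2 * Fintype.card ι) :
    ∀ e ∈ G.incidenceSet v, ∃ j, e ∈ (W j).edges := by
  classical
  refine exists_mem_edges_of_degree_le_sum_countP htrail hdisj ?_
  calc G.degree v
    _ ≤ ∑ _j : ι, 2 := by simpa [mul_comm] using hdeg
    _ ≤ ∑ j, (W j).edges.countP (v ∈ ·) := Finset.sum_le_sum fun j _ =>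
      two_le_countP_edges_of_isTrail (htrail j) (hnil j) (hsupp j) (hends j)

/-- the Claim in the proof of Theorem 8. If `W 0, …, W (m-1)` are
pairwise edge-disjoint trails, each containing the vertex `v` in its support but having
both endpoints different from `v`, and `deg v = 2 * m`, then every edge of `G` incident
to `v` occurs on one of the trails. -/
theorem edge_disjoint_trails_saturate_incident_edges {V : Type*}
    (G : SimpleGraph V) (v : V) [Fintype (G.neighborSet v)]
    (m : ℕ) (a b : Fin m → V)
    (W : (j : Fin m) → G.Walk (a j) (b j))
    (htrail : ∀ j, (W j).IsTrail)
    (hsupp : ∀ j, v ∈ (W j).support)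
    (hva : ∀ j, v ≠ a j) (hvb : ∀ j, v ≠ b j)
    (hdisj : ∀ i j, i ≠ j → List.Disjoint (W i).edges (W j).edges)
    (hdeg : G.degree v = 2 * m) :
    ∀ e ∈ G.incidenceSet v, ∃ j, e ∈ (W j).edges := by
  exact edge_disjoint_trails_saturate_incident_edges_general G v a b W htrail
    (fun j hnil => hva j (by simpa [SimpleGraph.Walk.nil_iff_support_eq.mp hnil] using hsupp j))
    hsupp (fun j _ => ⟨hva j, hvb j⟩) hdisj (by simp [hdeg])
end

section
/- Let G be a simple graph on a vertex type V, let k ≥ 1, and let (s_1, t_1), …, (s_k, t_k) be terminal pairs in V such that the 2(k−1) vertices t_1, …, t_{k−1}, s_2, …, s_k are pairwise distinct. Let G' be the simple graph on V ⊕ Unit in which two old vertices are adjacent exactly when they are adjacent in G, and the new vertex v (the element of Unit) is adjacent exactly to t_1, …, t_{k−1} and s_2, …, s_k. Then the following are equivalent: (i) there exist paths in G' — Q_i from s_i to t_i for i = 1, …, k, A_i from t_i to v for i = 1, …, k−1, and B_i from v to s_{i+1} for i = 1, …, k−1 — that are pairwise edge-disjoint (realizing the ordered waypoint sequence s_1,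 t_1, v, s_2, t_2, v, …, s_k, t_k); (ii) there exist pairwise edge-disjoint paths P_1, …, P_k in G with P_i from s_i to t_i. -/
/-!
Each of the `2n` spokes `A i`, `B i` must use an edge at the hub, and the hub has at most `2n`
edges. Edge-disjoint spokes therefore use up all hub edges, one each. This forces the intermediate
terminals to be distinct and keeps every `Q i` away from the hub, so that `Q i` is already a path
of `G`. Conversely, paths in `G` are completed by spokes of length one.
-/

open Function

theorem pairwise_on_sumElim {α β γ : Type*} {r : γ → γ → Prop} [Std.Symm r]
    {f : α → γ} {g : β → γ} :
    Pairwise (r on Sum.elim f g) ↔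
      Pairwise (r on f) ∧ Pairwise (r on g) ∧ ∀ a b, r (f a) (g b) := by
  constructor
  · intro h
    exact ⟨fun a a' hne => h (Sum.inl_injective.ne hne),
      fun b b' hne => h (Sum.inr_injective.ne hne), fun a b => h Sum.inl_ne_inr⟩
  · rintro ⟨hf, hg, hfg⟩ (a | b) (a' | b') hne
    · exact hf (ne_of_apply_ne Sum.inl hne)
    · exact hfg a b'
    · exact symm (hfg a' b)
    · exact hg (ne_of_apply_ne Sum.inr hne)

instance {α : Type*} : Std.Symm (List.Disjoint (α := α)) :=
  ⟨fun _ _ => List.disjoint_symm⟩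

theorem injective_and_forall_exists_mem_of_pairwise_disjoint {ι α : Type*} [Finite ι]
    {L : ι → List α} (hL : Pairwise (List.Disjoint on L)) {c : ι → α}
    (hc : ∀ i, ∃ j, c j ∈ L i) : Injective c ∧ ∀ j, ∃ i, c j ∈ L i := by
  choose g hg using hc
  have hcg : Injective (c ∘ g) := fun i i' (h : c (g i) = c (g i')) =>
    hL.eq fun hdisj => hdisj (hg i) (h ▸ hg i')
  have hg_surj : Surjective g := Finite.surjective_of_injective hcg.of_comp
  exact ⟨hcg.of_comp_right hg_surj, hg_surj.forall.2 fun i => ⟨i, hg i⟩⟩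

section Walks

variable {V W : Type*} {G : SimpleGraph V} {H : SimpleGraph W}

theorem exists_adj_mem_edges_of_mem_support {u v w : V} {p : G.Walk u w} (hv : v ∈ p.support)
    (hne : v ≠ w) : ∃ x, G.Adj v x ∧ s(v, x) ∈ p.edges := by
  obtain ⟨e, he, x, rfl⟩ :=
    (SimpleGraph.Walk.mem_support_iff_exists_mem_edges.1 hv).resolve_left hne
  exact ⟨x, p.adj_of_mem_edges he, he⟩

theorem exists_walk_map_copy_eq (f : G ↪g H) {u v : W} (p : H.Walk u v)
    (hp : ∀ w ∈ p.support, w ∈ Set.range f) :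
    ∀ {a b : V} (ha : f a = u) (hb : f b = v),
      ∃ q : G.Walk a b, (q.map f.toHom).copy ha hb = p := by
  induction p with
  | nil =>
    rintro a b rfl hb
    obtain rfl := f.injective hb
    exact ⟨.nil, rfl⟩
  | cons huc p ih =>
    rintro a b rfl rfl
    obtain ⟨c, rfl⟩ := hp _ (List.mem_cons_of_mem _ p.start_mem_support)
    obtain ⟨q, rfl⟩ := ih (fun w hw => hp w (List.mem_cons_of_mem _ hw)) rfl rfl
    exact ⟨.cons (f.map_adj_iff.1 huc) q, rfl⟩

theorem pairwise_disjoint_edges_map_iff {κ : Type*} (f : G ↪g H) {s t : κ → V}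
    (P : ∀ k, G.Walk (s k) (t k)) :
    Pairwise (List.Disjoint on fun k => ((P k).map f.toHom).edges) ↔
      Pairwise (List.Disjoint on fun k => (P k).edges) := by
  have hf : Injective (Sym2.map f.toHom) := Sym2.map.injective f.injective
  simp only [Pairwise, onFun, SimpleGraph.Walk.edges_map, List.Disjoint.map_iff hf]

theorem notMem_edges_map_of_notMem_range (f : G →g H) {v : W} (hv : v ∉ Set.range f) {a b : V}
    (p : G.Walk a b) (w : W) : s(v, w) ∉ (p.map f).edges := by
  intro he
  have hsupp := (p.map f).fst_mem_support_of_mem_edges he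
  rw [SimpleGraph.Walk.support_map, List.mem_map] at hsupp
  obtain ⟨x, -, hx⟩ := hsupp
  exact hv ⟨x, hx⟩

end Walks

section Hub

variable {V W κ ι : Type*} {G : SimpleGraph V} {H : SimpleGraph W} (f : G ↪g H) {hub : W}
  {s t : κ → V} {τ : ι → V}

theorem injective_and_exists_edge_disjoint_paths_of_spokes [Finite ι]
    (hrange : ∀ w, w ≠ hub → w ∈ Set.range f) (hhub : hub ∉ Set.range f)
    (hadj : ∀ w, H.Adj hub w → ∃ i, w = f (τ i))
    {Q : ∀ k, H.Walk (f (s k)) (f (t k))} (hQ : ∀ k, (Q k).IsPath)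
    {L : ι → List (Sym2 W)} (hL : ∀ i, ∃ w, H.Adj hub w ∧ s(hub, w) ∈ L i)
    (hdisj : Pairwise (List.Disjoint on Sum.elim (fun k => (Q k).edges) L)) :
    Injective τ ∧ ∃ P : ∀ k, G.Walk (s k) (t k), (∀ k, (P k).IsPath) ∧
      Pairwise (List.Disjoint on fun k => (P k).edges) := by
  obtain ⟨hQdisj, hLdisj, hQL⟩ :=
    pairwise_on_sumElim.1 hdisj
  have hspoke : ∀ i, ∃ j, s(hub, f (τ j)) ∈ L i := fun i => by
    obtain ⟨w, hw, hmem⟩ := hL i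
    obtain ⟨j, rfl⟩ := hadj w hw
    exact ⟨j, hmem⟩
  obtain ⟨hinj, hused⟩ := injective_and_forall_exists_mem_of_pairwise_disjoint hLdisj hspoke
  have hQhub : ∀ k, hub ∉ (Q k).support := fun k hmem => by
    obtain ⟨w, hw, hwQ⟩ := exists_adj_mem_edges_of_mem_support hmem fun h => hhub ⟨t k, h.symm⟩
    obtain ⟨j, rfl⟩ := hadj w hw
    obtain ⟨i, hi⟩ := hused j
    exact hQL k i hwQ hi
  have hlift : ∀ k, ∃ P : G.Walk (s k) (t k), P.map f.toHom = Q k := fun k =>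
    exists_walk_map_copy_eq f (Q k) (fun w hw => hrange w (ne_of_mem_of_not_mem hw (hQhub k)))
      rfl rfl
  choose P hP using hlift
  obtain rfl : (fun k => (P k).map f.toHom) = Q := funext hP
  exact ⟨fun i j hij => hinj (congrArg (fun x => s(hub, f x)) hij),
    P, fun k => (SimpleGraph.Walk.isPath_map_iff_of_injective f.injective).1 (hQ k),
    (pairwise_disjoint_edges_map_iff f P).1 hQdisj⟩

theorem pairwise_disjoint_edges_map_spokes (hhub : hub ∉ Set.range f) (hτ : Injective τ)
    {P : ∀ k, G.Walk (s k) (t k)} (hP : Pairwise (List.Disjoint on fun k => (P k).edges)) :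
    Pairwise (List.Disjoint on
      Sum.elim (fun k => ((P k).map f.toHom).edges) fun i => [s(hub, f (τ i))]) := by
  refine pairwise_on_sumElim.2
    ⟨(pairwise_disjoint_edges_map_iff f P).2 hP, fun i j hij => ?_, fun k i => ?_⟩
  · refine List.disjoint_singleton.2 fun hmem => hij (hτ (f.injective ?_))
    exact (Sym2.congr_right.1 (List.mem_singleton.1 hmem)).symm
  · exact List.disjoint_singleton.2 (notMem_edges_map_of_notMem_range f.toHom hhub (P k) _)

end Hub

theorem hub_waypoint_reduction_iff_edge_disjoint_paths_general {V κ α β : Type*}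
    [Finite α] [Finite β] (G : SimpleGraph V) (s t : κ → V) (a : α → V) (b : β → V)
    (G' : SimpleGraph (V ⊕ Unit))
    (hG'old : ∀ x y : V, G'.Adj (Sum.inl x) (Sum.inl y) ↔ G.Adj x y)
    (hG'hub : ∀ x : V, G'.Adj (Sum.inr ()) (Sum.inl x) ↔ (∃ i, x = a i) ∨ ∃ j, x = b j) :
    (∃ (Q : ∀ k, G'.Walk (Sum.inl (s k)) (Sum.inl (t k)))
       (A : ∀ i, G'.Walk (Sum.inl (a i)) (Sum.inr ()))
       (B : ∀ j, G'.Walk (Sum.inr ()) (Sum.inl (b j))),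
       (∀ k, (Q k).IsPath) ∧ (∀ i, (A i).IsPath) ∧ (∀ j, (B j).IsPath) ∧
       Pairwise (List.Disjoint on Sum.elim (fun k => (Q k).edges)
         (Sum.elim (fun i => (A i).edges) fun j => (B j).edges))) ↔
    Injective (Sum.elim a b) ∧ ∃ P : ∀ k, G.Walk (s k) (t k),
      (∀ k, (P k).IsPath) ∧ Pairwise (List.Disjoint on fun k => (P k).edges) := by
  let f : G ↪g G' := ⟨Embedding.inl, hG'old _ _⟩
  have hhub : Sum.inr () ∉ Set.range f := by rintro ⟨x, hx⟩; exact Sum.inl_ne_inr hx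
  constructor
  · rintro ⟨Q, A, B, hQ, -, -, hdisj⟩
    refine injective_and_exists_edge_disjoint_paths_of_spokes f (hub := Sum.inr ())
      ?_ hhub ?_ hQ ?_ hdisj
    · rintro (x | ⟨⟩) hx
      · exact ⟨x, rfl⟩
      · exact absurd rfl hx
    · rintro (x | ⟨⟩) hx
      · obtain ⟨i, rfl⟩ | ⟨j, rfl⟩ := (hG'hub x).1 hx
        exacts [⟨Sum.inl i, rfl⟩, ⟨Sum.inr j, rfl⟩]
      · exact absurd hx (G'.loopless.irrefl _)
    · rintro (i | j)
      · simpa using exists_adj_mem_edges_of_mem_support (A i).reverse.start_mem_support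
          Sum.inr_ne_inl
      · exact exists_adj_mem_edges_of_mem_support (B j).start_mem_support Sum.inr_ne_inl
  · rintro ⟨hinj, P, hP, hdisj⟩
    have hA i : G'.Adj (Sum.inl (a i)) (Sum.inr ()) := ((hG'hub _).2 (.inl ⟨i, rfl⟩)).symm
    have hB j : G'.Adj (Sum.inr ()) (Sum.inl (b j)) := (hG'hub _).2 (.inr ⟨j, rfl⟩)
    have hspokes : (Sum.elim (fun i => (hA i).toWalk.edges) fun j => (hB j).toWalk.edges) =
        fun x => [s(Sum.inr (), f (Sum.elim a b x))] := by
      ext1 (i | j)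
      exacts [congrArg (fun e => [e]) Sym2.eq_swap, rfl]
    refine ⟨fun k => (P k).map f.toHom, fun i => (hA i).toWalk, fun j => (hB j).toWalk,
      fun k => (hP k).map f.injective,
      fun i => (hA i).isPath_toWalk, fun j => (hB j).isPath_toWalk, ?_⟩
    rw [hspokes]
    exact pairwise_disjoint_edges_map_spokes f hhub hinj hdisj

/-- correctness of the hub-vertex reduction used in Theorem 8.
Let `(s i, t i)` for `i : Fin (n+1)` be terminal pairs (so `k = n + 1 ≥ 1`) such that
the `2n` intermediate terminals `t 0, …, t (n-1), s 1, …, s n` are pairwise distinct,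
and let `G'` on `V ⊕ Unit` agree with `G` on old vertices while the new hub vertex
`Sum.inr ()` is adjacent exactly to these intermediate terminals. Then the ordered
waypoint sequence `s 0, t 0, hub, s 1, t 1, hub, …, s n, t n` is realizable by
pairwise edge-disjoint paths in `G'` iff there are pairwise edge-disjoint paths
`P i : s i → t i` in `G`. -/
theorem hub_waypoint_reduction_iff_edge_disjoint_paths {V : Type*}
    (G : SimpleGraph V) (n : ℕ) (s t : Fin (n + 1) → V)
    (hdist : Function.Injective
      (Sum.elim (fun i : Fin n => t i.castSucc) (fun i : Fin n => s i.succ)))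
    (G' : SimpleGraph (V ⊕ Unit))
    (hG'old : ∀ a b : V, G'.Adj (Sum.inl a) (Sum.inl b) ↔ G.Adj a b)
    (hG'hub : ∀ a : V, G'.Adj (Sum.inr ()) (Sum.inl a) ↔
      (∃ i : Fin n, a = t i.castSucc ∨ a = s i.succ))
    (hG'loop : ¬ G'.Adj (Sum.inr ()) (Sum.inr ())) :
    (∃ (Q : (i : Fin (n + 1)) → G'.Walk (Sum.inl (s i)) (Sum.inl (t i)))
       (A : (i : Fin n) → G'.Walk (Sum.inl (t i.castSucc)) (Sum.inr ()))
       (B : (i : Fin n) → G'.Walk (Sum.inr ()) (Sum.inl (s i.succ))),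
       (∀ i, (Q i).IsPath) ∧ (∀ i, (A i).IsPath) ∧ (∀ i, (B i).IsPath) ∧
       (∀ x y : Fin (n + 1) ⊕ (Fin n ⊕ Fin n), x ≠ y →
         List.Disjoint
           (Sum.elim (fun i => (Q i).edges)
             (Sum.elim (fun i => (A i).edges) (fun i => (B i).edges)) x)
           (Sum.elim (fun i => (Q i).edges)
             (Sum.elim (fun i => (A i).edges) (fun i => (B i).edges)) y))) ↔
    (∃ P : (i : Fin (n + 1)) → G.Walk (s i) (t i),
       (∀ i, (P i).IsPath) ∧
       ∀ i j, i ≠ j → List.Disjoint (P i).edges (P j).edges) :=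
  (hub_waypoint_reduction_iff_edge_disjoint_paths_general G s t (fun i : Fin n => t i.castSucc)
    (fun i : Fin n => s i.succ) G' hG'old
    fun a => (hG'hub a).trans exists_or).trans (and_iff_right hdist)
end

section
/- Let D be the digraph on a four-element vertex type with distinct vertices u, v, x, y whose arcs are exactly u→x, v→x, x→y, y→u, and y→v. Then: (i) there exists a directed path from u to v and a directed path from v to u in D; and (ii) there do not exist a directed walk from u to v and a directed walk from v to u in D that are arc-disjoint (every directed walk from u to v and every directed walk from v to u must use the arc x→y). -/
/-!
Each direction is a one-arc cut: for `s = u` or `s = v`, the only arc that leaves `{s, x}` is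
`x → y`, so every walk from `s` to the other terminal uses it.
-/

theorem IsDiwalk.exists_mem_arcs_leaving {V : Type*} {r : V → V → Prop} {a b : V} {l : List V}
    {S : Set V} (h : IsDiwalk r a b l) (ha : a ∈ S) (hb : b ∉ S) :
    ∃ c d, (c, d) ∈ arcs l ∧ r c d ∧ c ∈ S ∧ d ∉ S := by
  obtain ⟨-, hhead, hlast, hchain⟩ := h
  induction l generalizing a with
  | nil => simp at hhead
  | cons p l ih =>
    obtain rfl : p = a := by simpa using hhead
    cases l with
    | nil =>
      obtain rfl : p = b := by simpa using hlast
      exact absurd ha hb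
    | cons q l =>
      obtain ⟨hpq, hchain⟩ := List.isChain_cons_cons.mp hchain
      by_cases hq : q ∈ S
      · obtain ⟨c, d, hcd, hcut⟩ := ih hq rfl (by simpa using hlast) hchain
        exact ⟨c, d, List.mem_cons_of_mem _ hcd, hcut⟩
      · exact ⟨p, q, List.mem_cons_self, hpq, ha, hq⟩

/-- The gadget of Figure 5 with a set `T` of terminals in place of `{u, v}`: its arcs are `t → x`
and `y → t` for `t ∈ T`, together with `x → y`. Vertices outside `T ∪ {x, y}` are allowed, and are
isolated. -/
structure IsGadget {V : Type*} (r : V → V → Prop) (T : Set V) (x y : V) : Prop where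
  left_notMem : x ∉ T
  right_notMem : y ∉ T
  left_ne_right : x ≠ y
  rel_iff : ∀ a b, r a b ↔ (a ∈ T ∧ b = x) ∨ (a = x ∧ b = y) ∨ (a = y ∧ b ∈ T)

namespace IsGadget

variable {V : Type*} {r : V → V → Prop} {T : Set V} {s t x y : V}

theorem isDipath (h : IsGadget r T x y) (hs : s ∈ T) (ht : t ∈ T) (hst : s ≠ t) :
    IsDipath r s t [s, x, y, t] := by
  have hsx : r s x := (h.rel_iff s x).mpr (.inl ⟨hs, rfl⟩)
  have hxy : r x y := (h.rel_iff x y).mpr (.inr (.inl ⟨rfl, rfl⟩))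
  have hyt : r y t := (h.rel_iff y t).mpr (.inr (.inr ⟨rfl, ht⟩))
  have hnodup : [s, x, y, t].Nodup := by
    simp [hst, h.left_ne_right, ne_of_mem_of_not_mem hs h.left_notMem,
      ne_of_mem_of_not_mem hs h.right_notMem, (ne_of_mem_of_not_mem ht h.left_notMem).symm,
      (ne_of_mem_of_not_mem ht h.right_notMem).symm]
  have hchain : [s, x, y, t].IsChain r := by simp [hsx, hxy, hyt]
  exact ⟨⟨List.cons_ne_nil _ _, rfl, rfl, hchain⟩, hnodup⟩

theorem eq_of_rel_of_leaving (h : IsGadget r T x y) (hs : s ∈ T) {c d : V} (hcd : r c d)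
    (hc : c ∈ ({s, x} : Set V)) (hd : d ∉ ({s, x} : Set V)) : c = x ∧ d = y := by
  rcases (h.rel_iff c d).mp hcd with ⟨-, rfl⟩ | hxy | ⟨rfl, -⟩
  · simp at hd
  · exact hxy
  · rcases hc with rfl | rfl
    · exact absurd hs h.right_notMem
    · exact absurd rfl h.left_ne_right

theorem mem_arcs (h : IsGadget r T x y) (hs : s ∈ T) (ht : t ∈ T) (hst : s ≠ t) {W : List V}
    (hW : IsDiwalk r s t W) : (x, y) ∈ arcs W := by
  have ht_notMem : t ∉ ({s, x} : Set V) := by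
    simp [hst.symm, ne_of_mem_of_not_mem ht h.left_notMem]
  obtain ⟨c, d, harc, hcd, hc, hd⟩ :=
    hW.exists_mem_arcs_leaving (Set.mem_insert s {x}) ht_notMem
  obtain ⟨rfl, rfl⟩ := h.eq_of_rel_of_leaving hs hcd hc hd
  exact harc

end IsGadget

theorem gadget_one_direction_only_general {V : Type*} {r : V → V → Prop} {T : Set V} {u v x y : V}
    (h : IsGadget r T x y) (hu : u ∈ T) (hv : v ∈ T) (huv : u ≠ v) :
    ((∃ P, IsDipath r u v P) ∧ (∃ Q, IsDipath r v u Q)) ∧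
    (∀ W, IsDiwalk r u v W → (x, y) ∈ arcs W) ∧
    (∀ W, IsDiwalk r v u W → (x, y) ∈ arcs W) ∧
    ¬ (∃ W W', IsDiwalk r u v W ∧ IsDiwalk r v u W' ∧
        List.Disjoint (arcs W) (arcs W')) := by
  refine ⟨⟨⟨_, h.isDipath hu hv huv⟩, ⟨_, h.isDipath hv hu huv.symm⟩⟩,
    fun W => h.mem_arcs hu hv huv, fun W => h.mem_arcs hv hu huv.symm, ?_⟩
  rintro ⟨W, W', hW, hW', hdisj⟩
  exact hdisj (h.mem_arcs hu hv huv hW) (h.mem_arcs hv hu huv.symm hW')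

/-- the gadget of Figure 5. In the digraph on the four distinct
vertices `u, v, x, y` with arcs exactly `u→x, v→x, x→y, y→u, y→v`, there are a directed
path from `u` to `v` and one from `v` to `u`, but no arc-disjoint pair of a directed
walk from `u` to `v` and a directed walk from `v` to `u` exists, since every directed
walk from `u` to `v`, and every one from `v` to `u`, must use the arc `x→y`. -/
theorem gadget_one_direction_only {V : Type*} (u v x y : V) (r : V → V → Prop)
    (hall : ∀ z : V, z = u ∨ z = v ∨ z = x ∨ z = y)
    (huv : u ≠ v) (hux : u ≠ x) (huy : u ≠ y)
    (hvx : v ≠ x) (hvy : v ≠ y) (hxy : x ≠ y)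
    (hr : ∀ a b, r a b ↔ ((a = u ∧ b = x) ∨ (a = v ∧ b = x) ∨ (a = x ∧ b = y) ∨
      (a = y ∧ b = u) ∨ (a = y ∧ b = v))) :
    ((∃ P, IsDipath r u v P) ∧ (∃ Q, IsDipath r v u Q)) ∧
    (∀ W, IsDiwalk r u v W → (x, y) ∈ arcs W) ∧
    (∀ W, IsDiwalk r v u W → (x, y) ∈ arcs W) ∧
    ¬ (∃ W W', IsDiwalk r u v W ∧ IsDiwalk r v u W' ∧
        List.Disjoint (arcs W) (arcs W')) := by
  have hgadget : IsGadget r {u, v} x y :=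
    ⟨by grind, by grind, hxy, by grind⟩
  exact gadget_one_direction_only_general hgadget (by simp) (by simp) huv
end

section
/- Let G be the simple graph on eight distinct vertices s, u, w, t, v_1, v_2, v_3, v_4 whose edges are exactly {s,u}, {u,w}, {u,t}, {v_3,v_2}, {v_2,v_1}, {v_1,w}, {v_3,s}, {s,v_4}, {v_4,t}. Then: (i) there exist edge-disjoint paths P from s to w and Q from w to t with total length |P| + |Q| = 6; (ii) every pair of edge-disjoint paths P from s to w and Q from w to t satisfies |P| + |Q| ≥ 6; and (iii) the unique shortest path from s to w is s, u, w of length 2, and every path Q from w to t that is edge-disjoint from this path has length at least 6, so every edge-disjoint pair (P, Q) in which P is a shortest s–w path has total length at least 8. -/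
/-!
The graph is the path `w, v₁, v₂, v₃, s, v₄, t, u` together with the two chords `{s, u}` and
`{u, w}`. Both chords join positions of opposite parity, so the graph is bipartite, and as `s`, `w`
and `t` sit at even positions every `s`–`w` walk and every `w`–`t` walk has positive even length.
Since `u` is the only common neighbour of `s` and `w`, an `s`–`w` walk of length less than `4` is
`s, u, w`. It uses both chords, and without them `t` is at distance `6` from `w` along the path.
Hence `|P| < 4` forces `|P| + |Q| ≥ 2 + 6`, and otherwise `|P| + |Q| ≥ 4 + 2`.
-/

theorem walk_end_le_start_add_length {V α : Type*} [AddMonoidWithOne α] [Preorder α]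
    [AddRightMono α] {G : SimpleGraph V} (f : V → α) {a b : V} (p : G.Walk a b)
    (hf : ∀ d ∈ p.darts, f d.snd ≤ f d.fst + 1) : f b ≤ f a + p.length := by
  induction p with
  | nil => simp
  | cons hadj p ih =>
    obtain ⟨hfirst, hrest⟩ := List.forall_mem_cons.mp hf
    rw [SimpleGraph.Walk.length_cons, add_comm p.length, Nat.cast_add, Nat.cast_one, ← add_assoc]
    exact (ih hrest).trans (by gcongr)

theorem exists_mem_commonNeighbors_support_eq {V : Type*} {G : SimpleGraph V} {a b : V}
    (p : G.Walk a b) (hp : p.length = 2) : ∃ x ∈ G.commonNeighbors a b, p.support = [a, x, b] :=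
  match p, hp with
  | .cons (v := x) hax (.cons hxb .nil), _ => ⟨x, ⟨hax, hxb.symm⟩, rfl⟩

theorem two_le_length_of_even {V : Type*} {G : SimpleGraph V} {a b : V} (p : G.Walk a b)
    (hab : a ≠ b) (hp : Even p.length) : 2 ≤ p.length := by
  have hlength : p.length ≠ 0 := fun hzero ↦ hab (SimpleGraph.Walk.eq_of_length_eq_zero hzero)
  grind

/-- `G` is the example graph of Figure 2 with the named vertices, on which the greedy routing from
`s` through the waypoint `w` to `t` is not optimal. Further vertices of `V` are allowed and are
isolated in `G`. -/
structure IsGreedyCounterexample {V : Type*} (G : SimpleGraph V) (s u w t v₁ v₂ v₃ v₄ : V) :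
    Prop where
  nodup : [s, u, w, t, v₁, v₂, v₃, v₄].Nodup
  adj_iff : ∀ a b : V, G.Adj a b ↔ s(a, b) ∈
    [s(s, u), s(u, w), s(u, t), s(v₃, v₂), s(v₂, v₁), s(v₁, w), s(v₃, s), s(s, v₄), s(v₄, t)]

namespace IsGreedyCounterexample

variable {V : Type*} {G : SimpleGraph V} {s u w t v₁ v₂ v₃ v₄ : V}

theorem exists_edgeDisjoint_isPath_length_add_eq_six
    (h : IsGreedyCounterexample G s u w t v₁ v₂ v₃ v₄) :
    ∃ (P : G.Walk s w) (Q : G.Walk w t), P.IsPath ∧ Q.IsPath ∧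
      List.Disjoint P.edges Q.edges ∧ P.length + Q.length = 6 := by
  have hsv₃ : G.Adj s v₃ := by simp [h.adj_iff]
  have hv₃v₂ : G.Adj v₃ v₂ := by simp [h.adj_iff]
  have hv₂v₁ : G.Adj v₂ v₁ := by simp [h.adj_iff]
  have hv₁w : G.Adj v₁ w := by simp [h.adj_iff]
  have hwu : G.Adj w u := by simp [h.adj_iff]
  have hut : G.Adj u t := by simp [h.adj_iff]
  have hnodup := h.nodup
  have hsupportP : [s, v₃, v₂, v₁, w].Nodup := by grind
  have hsupportQ : [w, u, t].Nodup := by grind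
  have huP : ∀ e ∈ [s(s, v₃), s(v₃, v₂), s(v₂, v₁), s(v₁, w)], u ∉ e := by
    simp only [List.forall_mem_cons, Sym2.mem_iff]
    grind
  have huQ : ∀ e ∈ [s(w, u), s(u, t)], u ∈ e := by simp
  exact ⟨.cons hsv₃ (.cons hv₃v₂ (.cons hv₂v₁ hv₁w.toWalk)), .cons hwu hut.toWalk,
    .mk' hsupportP, .mk' hsupportQ, fun e heP heQ ↦ huP e heP (huQ e heQ), rfl⟩

theorem exists_isPath_support_eq (h : IsGreedyCounterexample G s u w t v₁ v₂ v₃ v₄) :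
    ∃ P : G.Walk s w, P.IsPath ∧ P.length = 2 ∧ P.support = [s, u, w] := by
  have hsu : G.Adj s u := by simp [h.adj_iff]
  have huw : G.Adj u w := by simp [h.adj_iff]
  have hsupport : [s, u, w].Nodup := h.nodup.sublist (by simp)
  exact ⟨.cons hsu huw.toWalk, .mk' hsupport, rfl, rfl⟩

theorem exists_position (h : IsGreedyCounterexample G s u w t v₁ v₂ v₃ v₄) :
    ∃ pos : V → ℕ, [w, v₁, v₂, v₃, s, v₄, t, u].map pos = [0, 1, 2, 3, 4, 5, 6, 7] := by
  classical
  have hpath : [w, v₁, v₂, v₃, s, v₄, t, u].Nodup := by grind [h.nodup]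
  refine ⟨fun x ↦ [w, v₁, v₂, v₃, s, v₄, t, u].idxOf x, List.ext_getElem rfl fun i hi hi' ↦ ?_⟩
  rw [List.getElem_map, hpath.idxOf_getElem]
  exact (List.getElem_range (n := 8) hi').symm

theorem position_consecutive_of_adj (h : IsGreedyCounterexample G s u w t v₁ v₂ v₃ v₄)
    {pos : V → ℕ} (hpos : [w, v₁, v₂, v₃, s, v₄, t, u].map pos = [0, 1, 2, 3, 4, 5, 6, 7])
    {a b : V} (hab : G.Adj a b) (hchord : s(a, b) ∉ [s(s, u), s(u, w)]) :
    pos b = pos a + 1 ∨ pos a = pos b + 1 := by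
  simp only [List.map_cons, List.cons.injEq] at hpos
  simp only [h.adj_iff, List.mem_cons, List.not_mem_nil, or_false, Sym2.eq_iff] at hab hchord
  grind (splits := 20)

theorem not_even_position_iff_of_adj (h : IsGreedyCounterexample G s u w t v₁ v₂ v₃ v₄)
    {pos : V → ℕ} (hpos : [w, v₁, v₂, v₃, s, v₄, t, u].map pos = [0, 1, 2, 3, 4, 5, 6, 7])
    {a b : V} (hab : G.Adj a b) : ¬(Even (pos a) ↔ Even (pos b)) := by
  by_cases hchord : s(a, b) ∈ [s(s, u), s(u, w)]
  · simp only [List.map_cons, List.cons.injEq] at hpos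
    simp only [List.mem_cons, List.not_mem_nil, or_false, Sym2.eq_iff] at hchord
    grind
  · have hconsecutive := h.position_consecutive_of_adj hpos hab hchord
    grind

theorem even_length_iff (h : IsGreedyCounterexample G s u w t v₁ v₂ v₃ v₄)
    {pos : V → ℕ} (hpos : [w, v₁, v₂, v₃, s, v₄, t, u].map pos = [0, 1, 2, 3, 4, 5, 6, 7])
    {a b : V} (p : G.Walk a b) : Even p.length ↔ (Even (pos a) ↔ Even (pos b)) := by
  let parity : G.Coloring Bool := .mk (fun x ↦ decide (Even (pos x))) fun hadj ↦ by
    rw [ne_eq, decide_eq_decide]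
    exact h.not_even_position_iff_of_adj hpos hadj
  simpa [parity, SimpleGraph.Coloring.mk] using parity.even_length_iff_congr p

theorem even_length_s_w (h : IsGreedyCounterexample G s u w t v₁ v₂ v₃ v₄) (P : G.Walk s w) :
    Even P.length := by
  obtain ⟨pos, hpos⟩ := h.exists_position
  rw [h.even_length_iff hpos]
  grind

theorem even_length_w_t (h : IsGreedyCounterexample G s u w t v₁ v₂ v₃ v₄) (Q : G.Walk w t) :
    Even Q.length := by
  obtain ⟨pos, hpos⟩ := h.exists_position
  rw [h.even_length_iff hpos]
  grind

theorem two_le_length_s_w (h : IsGreedyCounterexample G s u w t v₁ v₂ v₃ v₄) (P : G.Walk s w) :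
    2 ≤ P.length :=
  two_le_length_of_even P (by grind [h.nodup]) (h.even_length_s_w P)

theorem two_le_length_w_t (h : IsGreedyCounterexample G s u w t v₁ v₂ v₃ v₄) (Q : G.Walk w t) :
    2 ≤ Q.length :=
  two_le_length_of_even Q (by grind [h.nodup]) (h.even_length_w_t Q)

theorem commonNeighbors_s_w (h : IsGreedyCounterexample G s u w t v₁ v₂ v₃ v₄) :
    G.commonNeighbors s w = {u} := by
  have hnodup := h.nodup
  ext x
  simp only [SimpleGraph.mem_commonNeighbors, h.adj_iff, List.mem_cons, List.not_mem_nil, or_false,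
    Sym2.eq_iff, Set.mem_singleton_iff]
  grind

theorem support_eq_of_length_lt_four (h : IsGreedyCounterexample G s u w t v₁ v₂ v₃ v₄)
    (P : G.Walk s w) (hP : P.length < 4) : P.support = [s, u, w] := by
  have hlength : P.length = 2 := by
    have := h.even_length_s_w P
    have := h.two_le_length_s_w P
    grind
  obtain ⟨x, hx, hsupport⟩ := exists_mem_commonNeighbors_support_eq P hlength
  rw [h.commonNeighbors_s_w, Set.mem_singleton_iff] at hx
  rwa [hx] at hsupport

theorem edges_eq_of_length_lt_four (h : IsGreedyCounterexample G s u w t v₁ v₂ v₃ v₄)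
    (P : G.Walk s w) (hP : P.length < 4) : P.edges = [s(s, u), s(u, w)] := by
  simp [SimpleGraph.Walk.edges_eq_zipWith_support, h.support_eq_of_length_lt_four P hP]

theorem six_le_length_of_disjoint (h : IsGreedyCounterexample G s u w t v₁ v₂ v₃ v₄)
    {Q : G.Walk w t} (hQ : Q.edges.Disjoint [s(s, u), s(u, w)]) : 6 ≤ Q.length := by
  obtain ⟨pos, hpos⟩ := h.exists_position
  have hstep : ∀ d ∈ Q.darts, pos d.snd ≤ pos d.fst + 1 := fun d hd ↦ by
    have := h.position_consecutive_of_adj hpos d.adj (hQ (List.mem_map_of_mem hd))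
    lia
  have hle := walk_end_le_start_add_length pos Q hstep
  have hw : pos w = 0 := by grind
  have ht : pos t = 6 := by grind
  simpa [hw, ht] using hle

theorem six_le_length_of_length_lt_four (h : IsGreedyCounterexample G s u w t v₁ v₂ v₃ v₄)
    {P : G.Walk s w} {Q : G.Walk w t} (hPQ : P.edges.Disjoint Q.edges) (hP : P.length < 4) :
    6 ≤ Q.length :=
  h.six_le_length_of_disjoint (h.edges_eq_of_length_lt_four P hP ▸ hPQ.symm)

end IsGreedyCounterexample

/-- the example of Figure 2: greedy fails, segments must be jointly
optimized. In the simple graph on the eight distinct vertices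
`s, u, w, t, v₁, v₂, v₃, v₄` with edges exactly
`{s,u}, {u,w}, {u,t}, {v₃,v₂}, {v₂,v₁}, {v₁,w}, {v₃,s}, {s,v₄}, {v₄,t}`:
(i) some edge-disjoint pair of paths `P : s → w`, `Q : w → t` has total length `6`;
(ii) every edge-disjoint pair has total length at least `6`;
(iii) the unique shortest `s`–`w` path is `s, u, w` of length `2`, every `w`–`t` path
edge-disjoint from it has length at least `6`, and hence every edge-disjoint pair in
which `P` is a shortest `s`–`w` path has total length at least `8`. -/
theorem greedy_waypoint_routing_suboptimal {V : Type*} [DecidableEq V]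
    (G : SimpleGraph V) (s u w t v₁ v₂ v₃ v₄ : V)
    (hnodup : ([s, u, w, t, v₁, v₂, v₃, v₄] : List V).Nodup)
    (hAdj : ∀ a b : V, G.Adj a b ↔ s(a, b) ∈
      [s(s, u), s(u, w), s(u, t), s(v₃, v₂), s(v₂, v₁), s(v₁, w),
       s(v₃, s), s(s, v₄), s(v₄, t)]) :
    (∃ (P : G.Walk s w) (Q : G.Walk w t), P.IsPath ∧ Q.IsPath ∧
        List.Disjoint P.edges Q.edges ∧ P.length + Q.length = 6) ∧
    (∀ (P : G.Walk s w) (Q : G.Walk w t), P.IsPath → Q.IsPath →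
        List.Disjoint P.edges Q.edges → 6 ≤ P.length + Q.length) ∧
    ((∃ P : G.Walk s w, P.IsPath ∧ P.length = 2 ∧ P.support = [s, u, w]) ∧
     (∀ P : G.Walk s w, P.IsPath → P.length ≤ 2 → P.support = [s, u, w]) ∧
     (∀ Q : G.Walk w t, Q.IsPath →
        List.Disjoint Q.edges [s(s, u), s(u, w)] → 6 ≤ Q.length) ∧
     (∀ (P : G.Walk s w) (Q : G.Walk w t), P.IsPath → Q.IsPath →
        List.Disjoint P.edges Q.edges →
        (∀ P' : G.Walk s w, P'.IsPath → P.length ≤ P'.length) →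
        8 ≤ P.length + Q.length)) := by
  have h : IsGreedyCounterexample G s u w t v₁ v₂ v₃ v₄ := ⟨hnodup, hAdj⟩
  refine ⟨h.exists_edgeDisjoint_isPath_length_add_eq_six, fun P Q _ _ hPQ ↦ ?_,
    h.exists_isPath_support_eq, fun P _ hP ↦ h.support_eq_of_length_lt_four P (by lia),
    fun Q _ hQ ↦ h.six_le_length_of_disjoint hQ, fun P Q _ _ hPQ hshortest ↦ ?_⟩
  · have hQ := h.two_le_length_w_t Q
    have hQ_of_short := h.six_le_length_of_length_lt_four hPQ
    lia
  · obtain ⟨P', hP', hlength, -⟩ := h.exists_isPath_support_eq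
    have hP_le := hshortest P' hP'
    have hP_ge := h.two_le_length_s_w P
    have hQ := h.six_le_length_of_length_lt_four hPQ (by lia)
    lia
end
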